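/- Let −1 < a < 0. There exists a constant C(a) > 0 such that for all x, y > 0 and all t ≠ 0: (i) if xy/(2|t|) ≤ 1 then |S_a(x,y,t)| ≤ C(a) |t|^{−(a+1)/2}; (ii) if xy/(2|t|) ≥ 1 and xy ≥ 1 then |S_a(x,y,t)| ≤ C(a) |t|^{−1/2} (xy)^{−a/2}; (iii) if xy/(2|t|) ≥ 1 and xy ≤ 1 then |S_a(x,y,t)| ≤ C(a) |t|^{−1/2}. -/

import Mathlib

open MeasureTheory Filter Set

noncomputable def besselJ (ν : ℂ) (z : ℝ) : ℂ :=
  ∑' k : ℕ, ((-1 : ℂ) ^ k / (Complex.Gamma (k + 1) * Complex.Gamma (ν + k + 1))) *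
    ((z : ℂ) / 2) ^ (2 * (k : ℂ) + ν)

noncomputable def Skernel (a x y t : ℝ) : ℂ :=
  if 0 < t then
    Complex.exp (-(Complex.I) * (((a + 1) * Real.pi / 4 : ℝ) : ℂ)) *
      (((2 * |t|) ^ (-(a + 1) / 2) : ℝ) : ℂ) *
      (((x * y / (2 * |t|)) ^ ((1 - a) / 2) : ℝ) : ℂ) *
      besselJ (((a - 1) / 2 : ℝ) : ℂ) (x * y / (2 * |t|)) *
      Complex.exp (Complex.I * ((((x ^ 2 + y ^ 2) / (4 * |t|)) : ℝ) : ℂ))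
  else
    Complex.exp ((Complex.I) * (((a + 1) * Real.pi / 4 : ℝ) : ℂ)) *
      (((2 * |t|) ^ (-(a + 1) / 2) : ℝ) : ℂ) *
      (((x * y / (2 * |t|)) ^ ((1 - a) / 2) : ℝ) : ℂ) *
      besselJ (((a - 1) / 2 : ℝ) : ℂ) (x * y / (2 * |t|)) *
      Complex.exp (-(Complex.I) * ((((x ^ 2 + y ^ 2) / (4 * |t|)) : ℝ) : ℂ))

open scoped Nat

/-- The Bessel–Clifford function `∑ wᵏ / (k! Γ(s + k))`. -/
noncomputable def besselClifford (s w : ℝ) : ℝ :=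
  ∑' k : ℕ, w ^ k / (k ! * Real.Gamma (s + k))

lemma exists_pos_le_Gamma_add_nat {s : ℝ} (hs : 0 < s) :
    ∃ m > 0, ∀ k : ℕ, m ≤ Real.Gamma (s + k) := by
  have hG := Real.Gamma_pos_of_pos hs
  refine ⟨min 1 s * Real.Gamma s, by positivity, fun k => ?_⟩
  have hsucc : ∀ n : ℕ, s * Real.Gamma s ≤ Real.Gamma (s + (n + 1 : ℕ)) := by
    intro n
    induction n with
    | zero => simp [Real.Gamma_add_one hs.ne']
    | succ n ih =>
      have h : s + ((n + 1 + 1 : ℕ) : ℝ) = (s + (n + 1 : ℕ)) + 1 := by push_cast; ring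
      rw [h, Real.Gamma_add_one (by positivity)]
      refine ih.trans (le_mul_of_one_le_left (Real.Gamma_pos_of_pos (by positivity)).le ?_)
      push_cast
      linarith [(Nat.cast_nonneg n : (0 : ℝ) ≤ n)]
  cases k with
  | zero => simpa using mul_le_of_le_one_left hG.le (min_le_left 1 s)
  | succ n => exact (mul_le_mul_of_nonneg_right (min_le_right 1 s) hG.le).trans (hsucc n)

lemma exists_abs_besselClifford_term_le {s : ℝ} (hs : 0 < s) :
    ∃ M > 0, ∀ (k : ℕ) (w r : ℝ), |w| ≤ r →
      |w ^ k / (k ! * Real.Gamma (s + k))| ≤ M * (r ^ k / k !) := by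
  obtain ⟨m, hm, hmk⟩ := exists_pos_le_Gamma_add_nat hs
  refine ⟨m⁻¹, by positivity, fun k w r hw => ?_⟩
  have hG := Real.Gamma_pos_of_pos (show 0 < s + k by positivity)
  have hr : 0 ≤ r := (abs_nonneg w).trans hw
  rw [abs_div, abs_pow, abs_of_pos (show 0 < (k ! : ℝ) * Real.Gamma (s + k) by positivity)]
  calc |w| ^ k / (k ! * Real.Gamma (s + k)) ≤ r ^ k / (k ! * m) := by
        gcongr
        exact hmk k
    _ = m⁻¹ * (r ^ k / k !) := by field_simp

lemma summable_besselClifford {s : ℝ} (hs : 0 < s) (w : ℝ) :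
    Summable fun k : ℕ => w ^ k / (k ! * Real.Gamma (s + k)) := by
  obtain ⟨M, -, hM⟩ := exists_abs_besselClifford_term_le hs
  exact .of_norm_bounded ((Real.summable_pow_div_factorial |w|).mul_left M)
    fun k => hM k w _ le_rfl

lemma hasDerivAt_besselClifford {s : ℝ} (hs : 0 < s) (w : ℝ) :
    HasDerivAt (besselClifford s) (besselClifford (s + 1) w) w := by
  obtain ⟨M, -, hM⟩ := exists_abs_besselClifford_term_le (show 0 < s + 1 by positivity)
  have key : ∀ (k : ℕ) (y : ℝ), (((k + 1 : ℕ) : ℝ) * y ^ k) / ((k + 1)! *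
      Real.Gamma (s + (k + 1 : ℕ))) = y ^ k / (k ! * Real.Gamma (s + 1 + k)) := by
    intro k y
    have h : s + ((k + 1 : ℕ) : ℝ) = s + 1 + k := by push_cast; ring
    have hG := Real.Gamma_pos_of_pos (show 0 < s + 1 + k by positivity)
    rw [h, Nat.factorial_succ]
    push_cast
    field_simp
  have hderiv := hasDerivAt_tsum_of_isPreconnected (𝕜 := ℝ)
    (g := fun (k : ℕ) y => y ^ (k + 1) / ((k + 1)! * Real.Gamma (s + (k + 1 : ℕ))))
    (g' := fun k y => y ^ k / (k ! * Real.Gamma (s + 1 + k)))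
    (u := fun k => M * ((|w| + 1) ^ k / k !)) (t := Metric.ball 0 (|w| + 1)) (y₀ := 0) (y := w)
    ((Real.summable_pow_div_factorial _).mul_left M) Metric.isOpen_ball
    (convex_ball _ _).isPreconnected
    (fun k y _ => ((hasDerivAt_pow (k + 1) y).div_const _).congr_deriv (key k y))
    (fun k y hy => hM k y _ (by simpa using (mem_ball_zero_iff.1 hy).le))
    (Metric.mem_ball_self (by positivity)) (by simp)
    (by simp)
  have heq : besselClifford s = fun y => (Real.Gamma s)⁻¹ +
      ∑' k : ℕ, y ^ (k + 1) / ((k + 1)! * Real.Gamma (s + (k + 1 : ℕ))) := by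
    ext y
    rw [besselClifford, (summable_besselClifford hs y).tsum_eq_zero_add]
    simp
  rw [heq]
  exact hderiv.const_add _

lemma besselClifford_contiguous {s : ℝ} (hs : 0 < s) (w : ℝ) :
    besselClifford s w = s * besselClifford (s + 1) w + w * besselClifford (s + 2) w := by
  have h1 := summable_besselClifford (show 0 < s + 1 by positivity) w
  have h2 := summable_besselClifford (show 0 < s + 2 by positivity) w
  rw [besselClifford, (summable_besselClifford hs w).tsum_eq_zero_add, besselClifford,
    h1.tsum_eq_zero_add, besselClifford, mul_add, add_assoc, ← tsum_mul_left, ← tsum_mul_left,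
    ← (((summable_nat_add_iff 1).2 h1).mul_left s).tsum_add (h2.mul_left w)]
  congr 1
  · have hG := Real.Gamma_pos_of_pos hs
    simp only [pow_zero, Nat.factorial_zero, Nat.cast_one, one_mul, Nat.cast_zero, add_zero]
    rw [Real.Gamma_add_one hs.ne']
    field_simp
  · refine tsum_congr fun k => ?_
    have hG := Real.Gamma_pos_of_pos (show 0 < s + 1 + k by positivity)
    have e1 : s + ((k + 1 : ℕ) : ℝ) = s + 1 + k := by push_cast; ring
    have e2 : s + 1 + ((k + 1 : ℕ) : ℝ) = s + 1 + k + 1 := by push_cast; ring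
    have e3 : s + 2 + (k : ℝ) = s + 1 + k + 1 := by ring
    rw [e1, e2, e3, Real.Gamma_add_one (by positivity), Nat.factorial_succ]
    push_cast
    field_simp
    ring

/-- Solutions of the Bessel-type equation `z D²g + a Dg + z g = 0` grow at most like `z ^ (-a / 2)`. -/
lemma exists_abs_le_rpow_of_bessel_ode {a : ℝ} {g g' : ℝ → ℝ}
    (hg : ∀ z > 0, HasDerivAt g (g' z) z)
    (hg' : ∀ z > 0, HasDerivAt g' (-(a / z) * g' z - g z) z) :
    ∃ K > 0, ∀ z ≥ 1, |g z| ≤ K * z ^ (-a / 2) := by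
  set c := |a ^ 2 / 4 - a / 2|
  set E : ℝ → ℝ := fun z => z ^ a * ((g' z + a / 2 * z⁻¹ * g z) ^ 2 + g z ^ 2) *
    Real.exp (c * z⁻¹)
  have hderiv : ∀ z > 0, HasDerivAt E (z ^ a * Real.exp (c * z⁻¹) * (z⁻¹ ^ 2 *
      (2 * (a ^ 2 / 4 - a / 2) * (g' z + a / 2 * z⁻¹ * g z) * g z -
        c * ((g' z + a / 2 * z⁻¹ * g z) ^ 2 + g z ^ 2)))) z := by
    intro z hz
    have hpow := Real.hasDerivAt_rpow_const (p := a) (Or.inl hz.ne')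
    have hinv := hasDerivAt_inv hz.ne'
    have hp := (hg' z hz).add ((hinv.const_mul (a / 2)).mul (hg z hz))
    have := (hpow.mul ((hp.pow 2).add ((hg z hz).pow 2))).mul (hinv.const_mul c).exp
    refine this.congr_deriv ?_
    simp only [Pi.add_apply, Pi.mul_apply, Pi.pow_apply, Nat.add_one_sub_one, pow_one]
    rw [Real.rpow_sub_one hz.ne']
    field_simp
    ring
  have hanti : AntitoneOn E (Ici 1) := by
    refine antitoneOn_of_deriv_nonpos (convex_Ici 1)
      (fun z hz => (hderiv z (one_pos.trans_le hz)).continuousAt.continuousWithinAt) ?_ ?_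
    · intro z hz
      rw [interior_Ici] at hz
      exact (hderiv z (one_pos.trans hz)).differentiableAt.differentiableWithinAt
    · intro z hz
      rw [interior_Ici] at hz
      have hz0 : 0 < z := one_pos.trans hz
      rw [(hderiv z hz0).deriv]
      refine mul_nonpos_of_nonneg_of_nonpos (by positivity)
        (mul_nonpos_of_nonneg_of_nonpos (by positivity) ?_)
      set p := g' z + a / 2 * z⁻¹ * g z
      have h1 : (a ^ 2 / 4 - a / 2) * (2 * p * g z) ≤ c * |2 * p * g z| :=
        (le_abs_self _).trans (abs_mul _ _).le
      have h2 : |2 * p * g z| ≤ p ^ 2 + g z ^ 2 :=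
        abs_le.2 ⟨by nlinarith [sq_nonneg (p + g z)], by nlinarith [sq_nonneg (p - g z)]⟩
      nlinarith [mul_le_mul_of_nonneg_left h2 (abs_nonneg (a ^ 2 / 4 - a / 2))]
  refine ⟨√(E 1 + 1), Real.sqrt_pos.2 (by positivity), fun z hz => ?_⟩
  have hz0 : 0 < z := one_pos.trans_le hz
  have hle : z ^ a * g z ^ 2 ≤ E 1 + 1 := by
    refine le_trans ?_ ((hanti (mem_Ici.2 le_rfl) hz hz).trans (by linarith))
    have hexp : 1 ≤ Real.exp (c * z⁻¹) := Real.one_le_exp (by positivity)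
    refine le_trans ?_ (le_mul_of_one_le_right (by positivity) hexp)
    gcongr
    nlinarith [sq_nonneg (g' z + a / 2 * z⁻¹ * g z)]
  have hsq : (z ^ (-a / 2)) ^ 2 * z ^ a = 1 := by
    rw [← Real.rpow_natCast, ← Real.rpow_mul hz0.le, ← Real.rpow_add hz0]
    norm_num
  refine abs_le_of_sq_le_sq ?_ (by positivity)
  rw [mul_pow, Real.sq_sqrt (by positivity)]
  calc g z ^ 2 = (z ^ (-a / 2)) ^ 2 * (z ^ a * g z ^ 2) := by rw [← mul_assoc, hsq, one_mul]
    _ ≤ (z ^ (-a / 2)) ^ 2 * (E 1 + 1) := by gcongr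
    _ = _ := mul_comm _ _

lemma exists_abs_besselClifford_le_rpow {a : ℝ} (ha : -1 < a) :
    ∃ K > 0, ∀ z ≥ 1, |besselClifford ((a + 1) / 2) (-(z ^ 2) / 4)| ≤ K * z ^ (-a / 2) := by
  have hs : 0 < (a + 1) / 2 := by linarith
  have hw : ∀ z : ℝ, HasDerivAt (fun z : ℝ => -(z ^ 2) / 4) (-(z / 2)) z := fun z => by
    refine ((hasDerivAt_pow 2 z).neg.div_const 4).congr_deriv ?_
    norm_num
    ring
  refine exists_abs_le_rpow_of_bessel_ode
    (g' := fun z => -(z / 2) * besselClifford ((a + 1) / 2 + 1) (-(z ^ 2) / 4))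
    (fun z _ => ?_) (fun z hz => ?_)
  · exact ((hasDerivAt_besselClifford hs _).comp z (hw z)).congr_deriv (mul_comm _ _)
  · have h := (hasDerivAt_besselClifford (show 0 < (a + 1) / 2 + 1 by positivity) _).comp z (hw z)
    refine (((hasDerivAt_id z).div_const 2).neg.mul h).congr_deriv ?_
    rw [besselClifford_contiguous hs, show (a + 1) / 2 + 1 + 1 = (a + 1) / 2 + 2 by ring]
    simp only [Function.comp_apply, id_eq, Pi.neg_apply]
    field_simp
    ring

lemma exists_abs_besselClifford_le {s r : ℝ} (hs : 0 < s) :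
    ∃ K > 0, ∀ w, |w| ≤ r → |besselClifford s w| ≤ K := by
  have hcont : Continuous (besselClifford s) :=
    continuous_iff_continuousAt.2 fun w => (hasDerivAt_besselClifford hs w).continuousAt
  obtain ⟨K, hK⟩ := (isCompact_Icc (a := -r) (b := r)).exists_bound_of_continuousOn
    hcont.continuousOn
  exact ⟨max K 1, by positivity, fun w hw => (hK w (abs_le.1 hw)).trans (le_max_left _ _)⟩

lemma besselJ_ofReal {ν z : ℝ} (hz : 0 < z) :
    besselJ ν z = (((z / 2) ^ ν * besselClifford (ν + 1) (-(z ^ 2) / 4) : ℝ) : ℂ) := by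
  rw [besselClifford, ← tsum_mul_left, Complex.ofReal_tsum, besselJ]
  refine tsum_congr fun k => ?_
  have hz2 : (0 : ℝ) < z / 2 := by positivity
  have hG : Complex.Gamma (ν + k + 1) = (Real.Gamma (ν + 1 + k) : ℝ) := by
    rw [← Complex.Gamma_ofReal]
    congr 1
    push_cast
    ring
  have hpow : ((z : ℂ) / 2) ^ (2 * (k : ℂ) + ν) = (((z / 2) ^ (2 * k) * (z / 2) ^ ν : ℝ) : ℂ) := by
    have h : (z / 2) ^ (2 * k) * (z / 2) ^ ν = (z / 2) ^ (2 * (k : ℝ) + ν) := by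
      rw [Real.rpow_add hz2, ← Real.rpow_natCast (z / 2) (2 * k)]
      push_cast
      rfl
    rw [h, Complex.ofReal_cpow hz2.le]
    push_cast
    rfl
  rw [hG, hpow, Complex.Gamma_nat_eq_factorial]
  have hneg : (-(z ^ 2) / 4) ^ k = (-1) ^ k * (z / 2) ^ (2 * k) := by
    rw [pow_mul, ← mul_pow]
    congr 1
    ring
  rw [hneg]
  push_cast
  ring

lemma norm_Skernel {a x y t : ℝ} (hx : 0 < x) (hy : 0 < y) (ht : t ≠ 0) :
    ‖Skernel a x y t‖ = 2 ^ ((1 - a) / 2) * (2 * |t|) ^ (-(a + 1) / 2) *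
      |besselClifford ((a + 1) / 2) (-((x * y / (2 * |t|)) ^ 2) / 4)| := by
  have ht' : 0 < |t| := abs_pos.2 ht
  set z := x * y / (2 * |t|) with hz
  have hz0 : 0 < z := by positivity
  have hpow : z ^ ((1 - a) / 2) * (z / 2) ^ ((a - 1) / 2) = 2 ^ ((1 - a) / 2) := by
    rw [Real.div_rpow hz0.le zero_le_two, show (a - 1) / 2 = -((1 - a) / 2) by ring,
      Real.rpow_neg hz0.le, Real.rpow_neg zero_le_two]
    field_simp
  have hexp : ∀ r : ℝ, ‖Complex.exp (-Complex.I * (r : ℂ))‖ = 1 := fun r => by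
    simp [Complex.norm_exp]
  have hexp' : ∀ r : ℝ, ‖Complex.exp (Complex.I * (r : ℂ))‖ = 1 := fun r => by
    simp [Complex.norm_exp]
  have hnorm : ‖Skernel a x y t‖ = (2 * |t|) ^ (-(a + 1) / 2) * z ^ ((1 - a) / 2) *
      ‖besselJ (((a - 1) / 2 : ℝ) : ℂ) z‖ := by
    unfold Skernel
    split_ifs <;> simp only [norm_mul, hexp, hexp', Complex.norm_real, Real.norm_eq_abs, one_mul,
      mul_one] <;> 
      rw [← hz, abs_of_pos (Real.rpow_pos_of_pos (mul_pos two_pos ht') _),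
        abs_of_pos (Real.rpow_pos_of_pos hz0 _)]
  rw [hnorm, besselJ_ofReal hz0, Complex.norm_real, Real.norm_eq_abs, abs_mul,
    abs_of_pos (show 0 < (z / 2) ^ ((a - 1) / 2) by positivity), ← hpow,
    show (a - 1) / 2 + 1 = (a + 1) / 2 by ring]
  ring

/-- For `-1 < a < 0`, the kernel satisfies the three-regime dispersive bound. -/
theorem kernel_dispersive_bound_neg (a : ℝ) (ha1 : -1 < a) (ha2 : a < 0) :
    ∃ C > (0:ℝ), ∀ x > (0:ℝ), ∀ y > (0:ℝ), ∀ t : ℝ, t ≠ 0 →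
      (x * y / (2 * |t|) ≤ 1 → ‖Skernel a x y t‖ ≤ C * |t| ^ (-(a + 1) / 2)) ∧
      (1 ≤ x * y / (2 * |t|) → 1 ≤ x * y →
        ‖Skernel a x y t‖ ≤ C * |t| ^ (-(1:ℝ) / 2) * (x * y) ^ (-a / 2)) ∧
      (1 ≤ x * y / (2 * |t|) → x * y ≤ 1 →
        ‖Skernel a x y t‖ ≤ C * |t| ^ (-(1:ℝ) / 2)) := by
  obtain ⟨K, hK, hKle⟩ :=
    exists_abs_besselClifford_le (r := 1) (show 0 < (a + 1) / 2 by linarith)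
  obtain ⟨L, hL, hLle⟩ := exists_abs_besselClifford_le_rpow ha1
  set A : ℝ := 2 ^ ((1 - a) / 2)
  set B : ℝ := 2 ^ (-(a + 1) / 2)
  set D : ℝ := 2 ^ (-(1 : ℝ) / 2) with hD
  have hApos : 0 < A := by positivity
  have hBpos : 0 < B := by positivity
  have hDpos : 0 < D := by positivity
  refine ⟨A * B * K + A * D * L, by positivity, fun x hx y hy t ht => ?_⟩
  have ht' : 0 < |t| := abs_pos.2 ht
  have hxy : 0 < x * y := mul_pos hx hy
  have hlarge : 1 ≤ x * y / (2 * |t|) → ‖Skernel a x y t‖ ≤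
      (A * B * K + A * D * L) * |t| ^ (-(1:ℝ) / 2) * (x * y) ^ (-a / 2) := by
    intro hz
    have hpow : (2 * |t|) ^ (-(a + 1) / 2) * (x * y / (2 * |t|)) ^ (-a / 2) =
        D * |t| ^ (-(1 : ℝ) / 2) * (x * y) ^ (-a / 2) := by
      rw [hD, ← Real.mul_rpow zero_le_two ht'.le, Real.div_rpow hxy.le (by positivity),
        show -(1 : ℝ) / 2 = -(a + 1) / 2 - -a / 2 by ring,
        Real.rpow_sub (show 0 < 2 * |t| by positivity)]
      ring
    rw [norm_Skernel hx hy ht]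
    calc A * (2 * |t|) ^ (-(a + 1) / 2) *
          |besselClifford ((a + 1) / 2) (-((x * y / (2 * |t|)) ^ 2) / 4)|
        ≤ A * (2 * |t|) ^ (-(a + 1) / 2) * (L * (x * y / (2 * |t|)) ^ (-a / 2)) := by
          gcongr
          exact hLle _ hz
      _ = A * L * ((2 * |t|) ^ (-(a + 1) / 2) * (x * y / (2 * |t|)) ^ (-a / 2)) := by ring
      _ = A * D * L * |t| ^ (-(1:ℝ) / 2) * (x * y) ^ (-a / 2) := by rw [hpow]; ring
      _ ≤ _ := by
          gcongr
          exact le_add_of_nonneg_left (by positivity)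
  refine ⟨fun hz => ?_, fun hz _ => hlarge hz, fun hz hle => ?_⟩
  · have hz0 : 0 < x * y / (2 * |t|) := by positivity
    rw [norm_Skernel hx hy ht, Real.mul_rpow zero_le_two ht'.le]
    have hw : |(-((x * y / (2 * |t|)) ^ 2) / 4)| ≤ 1 := by
      rw [abs_le]
      constructor <;> nlinarith
    calc A * (B * |t| ^ (-(a + 1) / 2)) *
          |besselClifford ((a + 1) / 2) (-((x * y / (2 * |t|)) ^ 2) / 4)|
        ≤ A * (B * |t| ^ (-(a + 1) / 2)) * K := by
          gcongr
          exact hKle _ hw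
      _ = A * B * K * |t| ^ (-(a + 1) / 2) := by ring
      _ ≤ _ := by
          gcongr
          exact le_add_of_nonneg_right (by positivity)
  · exact (hlarge hz).trans (mul_le_of_le_one_right (by positivity)
      (Real.rpow_le_one hxy.le hle (by linarith)))
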